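/- Let ψ: ℕ → (0,∞) with ψ(n) → ∞. Then the set E_inf(ψ) = { x ∈ (0,1] : liminf_{n→∞} (log d_n(x))/ψ(n) = 1 } has Hausdorff dimension 1/(1 + V), where log V = limsup_{n→∞} (log ψ(n))/n (so V ∈ [1,∞]; if V = ∞ the dimension is 0). -/

import Mathlib

open Filter Topology Real Set ENNReal

/-- The first Lüroth digit: `d₁(x) = ⌊1/x⌋ + 1`. -/
noncomputable def lurothD1 (x : ℝ) : ℕ := ⌊1 / x⌋₊ + 1

/-- The Lüroth map `T(x) = d₁(x)(d₁(x)-1)(x - 1/d₁(x))`. -/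
noncomputable def lurothT (x : ℝ) : ℝ :=
  (lurothD1 x : ℝ) * ((lurothD1 x : ℝ) - 1) * (x - 1 / (lurothD1 x : ℝ))

/-- The `n`-th Lüroth digit `dₙ(x) = d₁(T^{n-1}(x))`. -/
noncomputable def lurothDigit (n : ℕ) (x : ℝ) : ℕ := lurothD1 (lurothT^[n - 1] x)

lemma two_le_lurothD1 {x : ℝ} (hx : x ∈ Ioc (0 : ℝ) 1) : 2 ≤ lurothD1 x := by
  have : 1 ≤ ⌊1 / x⌋₊ := Nat.le_floor (by simpa using one_le_one_div hx.1 hx.2)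
  unfold lurothD1; omega

lemma one_div_lurothD1_lt {x : ℝ} (hx : x ∈ Ioc (0 : ℝ) 1) : 1 / (lurothD1 x : ℝ) < x := by
  have h := Nat.lt_floor_add_one (1 / x)
  rw [one_div_lt (by have := two_le_lurothD1 hx; positivity) hx.1]
  simpa [lurothD1] using h

lemma le_one_div_lurothD1_sub_one {x : ℝ} (hx : x ∈ Ioc (0 : ℝ) 1) :
    x ≤ 1 / ((lurothD1 x : ℝ) - 1) := by
  have h := Nat.floor_le (one_div_pos.2 hx.1).le
  have h1 : 1 ≤ ⌊1 / x⌋₊ := Nat.le_floor (by simpa using one_le_one_div hx.1 hx.2)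
  rw [le_one_div hx.1 (by simpa [lurothD1, Nat.pos_iff_ne_zero] using Nat.one_le_iff_ne_zero.1 h1)]
  simpa [lurothD1] using h

lemma lurothD1_eq {x : ℝ} {d : ℕ} (hd : 2 ≤ d) (h1 : 1 / (d : ℝ) < x)
    (h2 : x ≤ 1 / ((d : ℝ) - 1)) : lurothD1 x = d := by
  have hd' : (2 : ℝ) ≤ d := by exact_mod_cast hd
  have hx : 0 < x := lt_trans (by positivity) h1
  have h3 : ⌊1 / x⌋₊ = d - 1 := by
    rw [Nat.floor_eq_iff (by positivity)]
    rw [Nat.cast_sub (by omega)]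
    refine ⟨?_, ?_⟩
    · rw [le_one_div (by push_cast; linarith) hx]; simpa using h2
    · rw [one_div_lt hx (by push_cast; linarith)]; simpa using h1
  unfold lurothD1; omega

lemma eq_one_div_add_lurothT {x : ℝ} (hx : x ∈ Ioc (0 : ℝ) 1) :
    x = 1 / (lurothD1 x : ℝ) + lurothT x / ((lurothD1 x : ℝ) * ((lurothD1 x : ℝ) - 1)) := by
  have h : (2 : ℝ) ≤ lurothD1 x := by exact_mod_cast two_le_lurothD1 hx
  have h0 : (lurothD1 x : ℝ) ≠ 0 := by linarith
  have h1 : (lurothD1 x : ℝ) - 1 ≠ 0 := by linarith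
  unfold lurothT
  field_simp
  ring

lemma lurothT_mem {x : ℝ} (hx : x ∈ Ioc (0 : ℝ) 1) : lurothT x ∈ Ioc (0 : ℝ) 1 := by
  have h : (2 : ℝ) ≤ lurothD1 x := by exact_mod_cast two_le_lurothD1 hx
  have h1 := one_div_lurothD1_lt hx
  have h2 := le_one_div_lurothD1_sub_one hx
  have h3 : 0 < (lurothD1 x : ℝ) * ((lurothD1 x : ℝ) - 1) := by nlinarith
  refine ⟨mul_pos h3 (by linarith), ?_⟩
  calc lurothT x ≤ (lurothD1 x : ℝ) * ((lurothD1 x : ℝ) - 1) *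
        (1 / ((lurothD1 x : ℝ) - 1) - 1 / (lurothD1 x : ℝ)) := by
        unfold lurothT; gcongr
    _ = 1 := by
      have h0 : (lurothD1 x : ℝ) ≠ 0 := by linarith
      have h1 : (lurothD1 x : ℝ) - 1 ≠ 0 := by linarith
      field_simp
      ring

lemma lurothT_iterate_mem {x : ℝ} (hx : x ∈ Ioc (0 : ℝ) 1) (n : ℕ) :
    lurothT^[n] x ∈ Ioc (0 : ℝ) 1 := by
  induction n with
  | zero => simpa
  | succ n ih => rw [Function.iterate_succ_apply']; exact lurothT_mem ih

/-- Two points in the same Lüroth cylinder of order `n` differ by the length of the cylinder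
times the difference of their images under `T^n`. -/
lemma sub_eq_prod_mul_sub {x y : ℝ} (hx : x ∈ Ioc (0 : ℝ) 1) (hy : y ∈ Ioc (0 : ℝ) 1) (n : ℕ)
    (h : ∀ k < n, lurothD1 (lurothT^[k] x) = lurothD1 (lurothT^[k] y)) :
    x - y = (∏ k ∈ Finset.range n, (1 / ((lurothD1 (lurothT^[k] x) : ℝ) *
      ((lurothD1 (lurothT^[k] x) : ℝ) - 1)))) * (lurothT^[n] x - lurothT^[n] y) := by
  induction n with
  | zero => simp
  | succ n ih =>
    rw [ih fun k hk => h k (by omega), Finset.prod_range_succ]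
    have e1 := eq_one_div_add_lurothT (lurothT_iterate_mem hx n)
    have e2 := eq_one_div_add_lurothT (lurothT_iterate_mem hy n)
    rw [← Function.iterate_succ_apply' lurothT n] at e1 e2
    rw [← h n (by omega)] at e2
    have : lurothT^[n] x - lurothT^[n] y = 1 / ((lurothD1 (lurothT^[n] x) : ℝ) *
        ((lurothD1 (lurothT^[n] x) : ℝ) - 1)) * (lurothT^[n + 1] x - lurothT^[n + 1] y) := by
      linear_combination e1 - e2
    rw [this, mul_assoc]

/-- The sum of the Lüroth series with digits `d 0, d 1, …`. -/
noncomputable def lurothSeries (d : ℕ → ℕ) : ℝ :=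
  ∑' n, (∏ k ∈ Finset.range n, (1 / ((d k : ℝ) * ((d k : ℝ) - 1)))) * (1 / (d n : ℝ))

lemma one_div_mul_sub_one_mem {d : ℕ} (hd : 2 ≤ d) :
    0 < 1 / ((d : ℝ) * ((d : ℝ) - 1)) ∧ 1 / ((d : ℝ) * ((d : ℝ) - 1)) ≤ 1 / 2 := by
  have hd' : (2 : ℝ) ≤ d := by exact_mod_cast hd
  have : 2 ≤ (d : ℝ) * ((d : ℝ) - 1) := by nlinarith
  exact ⟨by positivity, by gcongr⟩

lemma prod_one_div_mul_sub_one_mem {d : ℕ → ℕ} (n : ℕ) (hd : ∀ k, 2 ≤ d k) :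
    0 < (∏ k ∈ Finset.range n, (1 / ((d k : ℝ) * ((d k : ℝ) - 1)))) ∧
      (∏ k ∈ Finset.range n, (1 / ((d k : ℝ) * ((d k : ℝ) - 1)))) ≤ (1 / 2) ^ n := by
  refine ⟨Finset.prod_pos fun k _ => (one_div_mul_sub_one_mem (hd k)).1, ?_⟩
  calc _ ≤ ∏ k ∈ Finset.range n, (1 / 2 : ℝ) :=
        Finset.prod_le_prod (fun k _ => (one_div_mul_sub_one_mem (hd k)).1.le)
          fun k _ => (one_div_mul_sub_one_mem (hd k)).2
    _ = _ := by simp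

lemma summable_lurothSeries {d : ℕ → ℕ} (hd : ∀ k, 2 ≤ d k) :
    Summable fun n => (∏ k ∈ Finset.range n, (1 / ((d k : ℝ) * ((d k : ℝ) - 1)))) *
      (1 / (d n : ℝ)) := by
  refine Summable.of_nonneg_of_le (fun n => ?_) (fun n => ?_)
    (summable_geometric_of_lt_one (r := 1 / 2) (by norm_num) (by norm_num))
  · exact mul_nonneg (prod_one_div_mul_sub_one_mem n hd).1.le (by positivity)
  · have h1 := prod_one_div_mul_sub_one_mem n hd
    have h2 : 1 / (d n : ℝ) ≤ 1 := by
      have : (2 : ℝ) ≤ d n := by exact_mod_cast hd n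
      rw [div_le_one (by linarith)]; linarith
    calc _ ≤ (∏ k ∈ Finset.range n, (1 / ((d k : ℝ) * ((d k : ℝ) - 1)))) * 1 :=
          mul_le_mul_of_nonneg_left h2 h1.1.le
      _ ≤ _ := by simpa using h1.2

lemma lurothSeries_eq {d : ℕ → ℕ} (hd : ∀ k, 2 ≤ d k) :
    lurothSeries d = 1 / (d 0 : ℝ) +
      1 / ((d 0 : ℝ) * ((d 0 : ℝ) - 1)) * lurothSeries (fun k => d (k + 1)) := by
  unfold lurothSeries
  rw [(summable_lurothSeries hd).tsum_eq_zero_add, ← tsum_mul_left]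
  congr 1
  · simp
  · congr 1; ext n; rw [Finset.prod_range_succ']; ring

lemma lurothSeries_mem {d : ℕ → ℕ} (hd : ∀ k, 2 ≤ d k) : lurothSeries d ∈ Ioc (0 : ℝ) 1 := by
  refine ⟨(summable_lurothSeries hd).tsum_pos (fun n => ?_) 0 ?_, ?_⟩
  · exact mul_nonneg (prod_one_div_mul_sub_one_mem n hd).1.le (by positivity)
  · have := hd 0
    simp; omega
  · refine Real.tsum_le_of_sum_range_le (fun n => ?_) fun n => ?_
    · exact mul_nonneg (prod_one_div_mul_sub_one_mem n hd).1.le (by positivity)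
    induction n generalizing d with
    | zero => simp
    | succ n ih =>
      rw [Finset.sum_range_succ']
      have h1 := one_div_mul_sub_one_mem (hd 0)
      have h2 := ih fun k => hd (k + 1)
      have hd' : (2 : ℝ) ≤ d 0 := by exact_mod_cast hd 0
      simp only [Finset.prod_range_succ' _, Finset.range_zero, Finset.prod_empty, one_mul]
      calc _ = 1 / ((d 0 : ℝ) * ((d 0 : ℝ) - 1)) * (∑ n ∈ Finset.range n,
            (∏ k ∈ Finset.range n, (1 / ((d (k + 1) : ℝ) * ((d (k + 1) : ℝ) - 1)))) *
            (1 / (d (n + 1) : ℝ))) + 1 / (d 0 : ℝ) := by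
            rw [Finset.mul_sum]; congr 1; refine Finset.sum_congr rfl fun k _ => ?_; ring
        _ ≤ 1 / ((d 0 : ℝ) * ((d 0 : ℝ) - 1)) * 1 + 1 / (d 0 : ℝ) := by
            have := mul_le_mul_of_nonneg_left h2 h1.1.le
            linarith
        _ = 1 / ((d 0 : ℝ) - 1) := by
          have h0 : (d 0 : ℝ) ≠ 0 := by linarith
          have h1 : (d 0 : ℝ) - 1 ≠ 0 := by linarith
          field_simp; ring
        _ ≤ 1 := by rw [div_le_one (by linarith)]; linarith

lemma lurothD1_lurothSeries {d : ℕ → ℕ} (hd : ∀ k, 2 ≤ d k) :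
    lurothD1 (lurothSeries d) = d 0 := by
  have h := lurothSeries_mem (d := fun k => d (k + 1)) fun k => hd (k + 1)
  have h1 := one_div_mul_sub_one_mem (hd 0)
  have hd' : (2 : ℝ) ≤ d 0 := by exact_mod_cast hd 0
  refine lurothD1_eq (hd 0) ?_ ?_
  · rw [lurothSeries_eq hd]
    have := mul_pos h1.1 h.1
    linarith
  · rw [lurothSeries_eq hd]
    calc _ ≤ 1 / (d 0 : ℝ) + 1 / ((d 0 : ℝ) * ((d 0 : ℝ) - 1)) * 1 := by
          have := mul_le_mul_of_nonneg_left h.2 h1.1.le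
          linarith
      _ = _ := by
          have h0 : (d 0 : ℝ) ≠ 0 := by linarith
          have h1 : (d 0 : ℝ) - 1 ≠ 0 := by linarith
          field_simp; ring

lemma lurothT_lurothSeries {d : ℕ → ℕ} (hd : ∀ k, 2 ≤ d k) :
    lurothT (lurothSeries d) = lurothSeries fun k => d (k + 1) := by
  have hd' : (2 : ℝ) ≤ d 0 := by exact_mod_cast hd 0
  unfold lurothT
  rw [lurothD1_lurothSeries hd, lurothSeries_eq hd]
  have h0 : (d 0 : ℝ) ≠ 0 := by linarith
  have h1 : (d 0 : ℝ) - 1 ≠ 0 := by linarith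
  field_simp
  ring

lemma lurothT_iterate_lurothSeries {d : ℕ → ℕ} (hd : ∀ k, 2 ≤ d k) (n : ℕ) :
    lurothT^[n] (lurothSeries d) = lurothSeries fun k => d (k + n) := by
  induction n with
  | zero => simp
  | succ n ih =>
    rw [Function.iterate_succ_apply', ih, lurothT_lurothSeries fun k => hd _]
    congr 1; ext k; congr 1; omega

lemma lurothD1_iterate_lurothSeries {d : ℕ → ℕ} (hd : ∀ k, 2 ≤ d k) (n : ℕ) :
    lurothD1 (lurothT^[n] (lurothSeries d)) = d n := by
  rw [lurothT_iterate_lurothSeries hd, lurothD1_lurothSeries fun k => hd _, zero_add]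

lemma frequently_rpow_prod_le {c : ℕ → ℕ} (hc : ∀ k, 1 ≤ c k) {b b' : ℝ} (hb : 1 ≤ b)
    (hbb' : b < b') (h : ∃ᶠ n in atTop, b' ^ n / 2 ≤ Real.log ((c n : ℝ) + 1)) :
    ∃ᶠ n in atTop, (∏ k ∈ Finset.range n, (c k : ℝ)) ^ (b - 1) ≤ c n := by
  by_contra hcon
  rw [not_frequently] at hcon
  obtain ⟨m, hm⟩ := eventually_atTop.1 hcon
  have hc' : ∀ k, (1 : ℝ) ≤ c k := fun k => by exact_mod_cast hc k
  set P : ℕ → ℝ := fun n => ∏ k ∈ Finset.range n, (c k : ℝ) with hP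
  have hP1 : ∀ n, 1 ≤ P n := fun n => Finset.one_le_prod fun k _ => hc' k
  have hPs : ∀ n, Real.log (P (n + 1)) = Real.log (P n) + Real.log (c n) := fun n => by
    rw [← Real.log_mul (by linarith [hP1 n]) (by linarith [hc' n])]
    simp only [hP, Finset.prod_range_succ]
  have hlc : ∀ n, m ≤ n → Real.log (c n) ≤ (b - 1) * Real.log (P n) := fun n hn => by
    rw [← Real.log_rpow (by linarith [hP1 n])]
    exact Real.log_le_log (by linarith [hc' n]) (not_le.1 (hm n hn)).le
  have hK : ∀ j, Real.log (P (m + j)) ≤ b ^ j * Real.log (P m) := fun j => by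
    induction j with
    | zero => simp
    | succ j ih =>
      rw [← add_assoc, hPs, pow_succ]
      have := hlc (m + j) (by omega)
      nlinarith
  have hK0 := Real.log_nonneg (hP1 m)
  set K := Real.log (P m)
  have hev : ∀ᶠ n : ℕ in atTop, 2 * (b * K + Real.log 2) < (b' / b) ^ n :=
    (tendsto_pow_atTop_atTop_of_one_lt (by rw [one_lt_div] <;> linarith)).eventually_gt_atTop _
  obtain ⟨n, hn, hn2, hn3⟩ := (h.and_eventually (hev.and (eventually_ge_atTop m))).exists
  obtain ⟨j, rfl⟩ := Nat.exists_eq_add_of_le hn3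
  rw [div_pow, lt_div_iff₀ (by positivity)] at hn2
  have h1 : Real.log ((c (m + j) : ℝ) + 1) ≤ Real.log (c (m + j)) + Real.log 2 := by
    rw [← Real.log_mul (by linarith [hc' (m + j)]) (by norm_num)]
    exact Real.log_le_log (by positivity) (by linarith [hc' (m + j)])
  have h2 : Real.log (c (m + j)) ≤ b ^ (j + 1) * K := by
    have h3 := hK (j + 1)
    have h4 := hPs (m + j)
    rw [← add_assoc, h4] at h3
    linarith [Real.log_nonneg (hP1 (m + j))]
  have h3 : b ^ (j + 1) ≤ b ^ (m + j) * b := by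
    rw [← pow_succ]; exact pow_le_pow_right₀ hb (by omega)
  have h4 : 1 ≤ b ^ (m + j) := one_le_pow₀ hb
  have h5 : 0 < Real.log 2 := Real.log_pos (by norm_num)
  nlinarith [mul_le_mul_of_nonneg_right h3 hK0, mul_le_mul_of_nonneg_right h4 h5.le]

lemma tsum_prod_eq_prod_tsum (g : ℕ → ℕ → ℝ≥0∞) (n : ℕ) :
    ∑' w : Fin n → ℕ, ∏ k : Fin n, g k (w k) = ∏ k ∈ Finset.range n, ∑' c, g k c := by
  induction n with
  | zero => simp
  | succ n ih =>
    rw [← (Fin.snocEquiv fun _ => ℕ).tsum_eq, Finset.prod_range_succ, ← ih]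
    simp only [Fin.prod_univ_castSucc, Fin.snocEquiv_apply, Fin.snoc_castSucc, Fin.snoc_last,
      Fin.val_castSucc, Fin.val_last]
    rw [ENNReal.tsum_prod (f := fun (a : ℕ) (w : Fin n → ℕ) => (∏ i : Fin n, g i (w i)) * g n a), mul_comm,
      ← ENNReal.tsum_mul_right]
    refine tsum_congr fun a => ?_
    rw [ENNReal.tsum_mul_right, mul_comm]

lemma exists_tsum_ite_le_half {g : ℕ → ℝ≥0∞} (hg : ∑' c, g c ≠ ∞) :
    ∃ M, ∑' c, (if c < M then 0 else g c) ≤ 1 / 2 := by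
  have h := ENNReal.tendsto_sum_nat_add g hg
  obtain ⟨M, hM⟩ := (h.eventually_le_const (u := 1 / 2) (by simp)).exists
  refine ⟨M, ?_⟩
  rw [← ENNReal.summable.sum_add_tsum_nat_add' (k := M) ]
  rw [Finset.sum_eq_zero fun c hc => by simp [Finset.mem_range.1 hc]]
  simpa using hM

/-- The Lüroth digits, indexed from zero and decreased by one. -/
noncomputable def lurothPred (k : ℕ) (x : ℝ) : ℕ := ⌊1 / lurothT^[k] x⌋₊

lemma lurothD1_iterate (k : ℕ) (x : ℝ) : lurothD1 (lurothT^[k] x) = lurothPred k x + 1 := rfl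

lemma one_le_lurothPred {x : ℝ} (hx : x ∈ Ioc (0 : ℝ) 1) (k : ℕ) : 1 ≤ lurothPred k x := by
  have := two_le_lurothD1 (lurothT_iterate_mem hx k)
  rw [lurothD1_iterate] at this
  omega

/-- The part of a Lüroth cylinder of order `n` in which the next digit is large. -/
def lurothPiece (b : ℝ) (N M n : ℕ) (w : Fin n → ℕ) : Set ℝ :=
  {x | x ∈ Ioc (0 : ℝ) 1 ∧ (∀ k : Fin n, lurothPred k x = w k) ∧
    (∀ k, N ≤ k → M ≤ lurothPred k x) ∧
    (∏ k ∈ Finset.range n, (lurothPred k x : ℝ)) ^ (b - 1) ≤ lurothPred n x}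

lemma abs_sub_le_of_mem_lurothPiece {b : ℝ} {N M n : ℕ} {w : Fin n → ℕ} {x y : ℝ}
    (hx : x ∈ lurothPiece b N M n w) (hy : y ∈ lurothPiece b N M n w) :
    |x - y| ≤ (∏ k : Fin n, (w k : ℝ)) ^ (-(1 + b)) ∧ |x - y| ≤ (1 / 2) ^ n := by
  obtain ⟨hx1, hx2, -, hx4⟩ := hx
  obtain ⟨hy1, hy2, -, hy4⟩ := hy
  have hPx : ∏ k ∈ Finset.range n, (lurothPred k x : ℝ) = ∏ k : Fin n, (w k : ℝ) := by
    rw [Finset.prod_range]; exact Finset.prod_congr rfl fun k _ => by rw [hx2 k]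
  have hPy : ∏ k ∈ Finset.range n, (lurothPred k y : ℝ) = ∏ k : Fin n, (w k : ℝ) := by
    rw [Finset.prod_range]; exact Finset.prod_congr rfl fun k _ => by rw [hy2 k]
  have hc : ∀ k, (1 : ℝ) ≤ lurothPred k x := fun k => by exact_mod_cast one_le_lurothPred hx1 k
  have hP1 : 1 ≤ ∏ k : Fin n, (w k : ℝ) := by
    rw [← hPx]; exact Finset.one_le_prod fun k _ => hc k
  rw [hPx] at hx4
  rw [hPy] at hy4
  have heq := sub_eq_prod_mul_sub hx1 hy1 n fun k hk => by
    rw [lurothD1_iterate, lurothD1_iterate, hx2 ⟨k, hk⟩, hy2 ⟨k, hk⟩]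
  simp only [lurothD1_iterate] at heq
  have hL := prod_one_div_mul_sub_one_mem (d := fun k => lurothPred k x + 1) n fun k => by
    have := one_le_lurothPred hx1 k; omega
  set P := ∏ k : Fin n, (w k : ℝ)
  set L := ∏ k ∈ Finset.range n, (1 / (((lurothPred k x + 1 : ℕ) : ℝ) *
      (((lurothPred k x + 1 : ℕ) : ℝ) - 1)))
  have hLP : L ≤ P ^ (-2 : ℝ) := by
    have : P ^ (-2 : ℝ) = ∏ k ∈ Finset.range n, (1 / (lurothPred k x : ℝ) ^ 2) := by
      rw [Real.rpow_neg (by linarith), Real.rpow_two, ← hPx, ← Finset.prod_pow]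
      simp
    rw [this]
    refine Finset.prod_le_prod (fun k _ => ?_) fun k _ => ?_
    · have := hc k
      push_cast
      rw [add_sub_cancel_right]; positivity
    · have := hc k
      push_cast
      rw [add_sub_cancel_right]
      exact one_div_le_one_div_of_le (by positivity) (by nlinarith)
  have key : ∀ z : ℝ, z ∈ Ioc (0 : ℝ) 1 → P ^ (b - 1) ≤ lurothPred n z →
      lurothT^[n] z ≤ P ^ (-(b - 1)) := fun z hz hzP => by
    have h := le_one_div_lurothD1_sub_one (lurothT_iterate_mem hz n)
    rw [lurothD1_iterate] at h
    push_cast at h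
    rw [add_sub_cancel_right] at h
    refine h.trans ?_
    rw [Real.rpow_neg (by linarith), ← one_div]
    exact one_div_le_one_div_of_le (by positivity) hzP
  have hTx := lurothT_iterate_mem hx1 n
  have hTy := lurothT_iterate_mem hy1 n
  have hTx' := key x hx1 hx4
  have hTy' := key y hy1 hy4
  have h1 : |lurothT^[n] x - lurothT^[n] y| ≤ P ^ (-(b - 1)) := by
    rw [abs_le]; constructor <;> linarith [hTx.1, hTy.1]
  have h2 : |lurothT^[n] x - lurothT^[n] y| ≤ 1 := by
    rw [abs_le]; constructor <;> linarith [hTx.1, hTy.1, hTx.2, hTy.2]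
  rw [heq, abs_mul, abs_of_pos hL.1]
  constructor
  · have : P ^ (-(1 + b)) = P ^ (-2 : ℝ) * P ^ (-(b - 1)) := by
      rw [← Real.rpow_add (by linarith)]; congr 1; ring
    rw [this]
    exact mul_le_mul hLP h1 (abs_nonneg _) (by positivity)
  · calc _ ≤ (1 / 2) ^ n * (1 : ℝ) := mul_le_mul hL.2 h2 (abs_nonneg _) (by positivity)
      _ = _ := mul_one _

lemma ediam_rpow_lurothPiece_le {b s : ℝ} (hs : 0 < s) (N M n : ℕ)
    (w : Fin n → ℕ) : Metric.ediam (lurothPiece b N M n w) ^ s ≤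
      ∏ k : Fin n, (if N ≤ k ∧ w k < M then 0
        else ENNReal.ofReal ((w k : ℝ) ^ (-(s * (1 + b))))) := by
  rcases (lurothPiece b N M n w).eq_empty_or_nonempty with h | ⟨x, hx⟩
  · rw [h, Metric.ediam_empty, ENNReal.zero_rpow_of_pos hs]; exact zero_le
  · have h1 : Metric.ediam (lurothPiece b N M n w) ≤
        ENNReal.ofReal ((∏ k : Fin n, (w k : ℝ)) ^ (-(1 + b))) := by
      refine Metric.ediam_le fun x hx y hy => ?_
      rw [edist_dist, Real.dist_eq]
      exact ENNReal.ofReal_le_ofReal (abs_sub_le_of_mem_lurothPiece hx hy).1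
    refine (ENNReal.rpow_le_rpow h1 hs.le).trans ?_
    rw [ENNReal.ofReal_rpow_of_nonneg (by positivity) hs.le, ← Real.rpow_mul (by positivity),
      ← Real.finsetProd_rpow _ _ (fun k _ => by positivity),
      ENNReal.ofReal_prod_of_nonneg fun k _ => by positivity]
    refine Finset.prod_le_prod' fun k _ => ?_
    rw [if_neg, show -(1 + b) * s = -(s * (1 + b)) by ring]
    rintro ⟨h2, h3⟩
    have := hx.2.2.1 k h2
    rw [hx.2.1 k] at this
    omega

lemma prod_le_two_mul_pow_mul {a : ℕ → ℝ≥0∞} {Z : ℝ≥0∞} {N : ℕ} (hZ : 1 ≤ Z)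
    (h1 : ∀ k, a k ≤ Z) (h2 : ∀ k, N ≤ k → a k ≤ 1 / 2) (n : ℕ) :
    ∏ k ∈ Finset.range n, a k ≤ (2 * Z) ^ N * (1 / 2) ^ n := by
  have key : ∏ k ∈ Finset.range n, a k ≤ (2 * Z) ^ (min n N) * (1 / 2) ^ n := by
    induction n with
    | zero => simp
    | succ n ih =>
      rw [Finset.prod_range_succ]
      rcases lt_or_ge n N with h | h
      · refine (mul_le_mul' ih (h1 n)).trans ?_
        rw [min_eq_left h.le, min_eq_left (by omega : n + 1 ≤ N), pow_succ, pow_succ]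
        have : (2 * Z) * (1 / 2) = Z := by
          rw [mul_comm 2, mul_assoc, one_div, ENNReal.mul_inv_cancel (by simp) (by simp), mul_one]
        calc _ = (2 * Z) ^ n * (1 / 2) ^ n * ((2 * Z) * (1 / 2)) := by rw [this]
          _ ≤ _ := le_of_eq (by ring)
      · refine (mul_le_mul' ih (h2 n h)).trans ?_
        rw [min_eq_right h, min_eq_right (by omega : N ≤ n + 1), pow_succ, mul_assoc]
  refine key.trans (mul_le_mul' (pow_le_pow_right₀ ?_ (min_le_right _ _)) le_rfl)
  exact hZ.trans (le_mul_of_one_le_left zero_le (by norm_num))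

lemma exists_forall_dimH_le {s : NNReal} {b : ℝ} (hs : 0 < s)
    (h : 1 < (s : ℝ) * (1 + b)) : ∃ M : ℕ, ∀ N, dimH {x : ℝ | x ∈ Ioc (0 : ℝ) 1 ∧
      (∀ k, N ≤ k → M ≤ lurothPred k x) ∧ ∃ᶠ n in atTop,
      (∏ k ∈ Finset.range n, (lurothPred k x : ℝ)) ^ (b - 1) ≤ lurothPred n x} ≤ s := by
  have hs' : (0 : ℝ) < s := hs
  set g : ℕ → ℝ≥0∞ := fun c => ENNReal.ofReal ((c : ℝ) ^ (-((s : ℝ) * (1 + b)))) with hg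
  have hsum : ∑' c, g c ≠ ∞ := by
    have : Summable fun c : ℕ => (c : ℝ) ^ (-((s : ℝ) * (1 + b))) :=
      Real.summable_nat_rpow.2 (by linarith)
    exact this.tsum_ofReal_ne_top
  obtain ⟨M, hM⟩ := exists_tsum_ite_le_half hsum
  refine ⟨M, fun N => ?_⟩
  set a : ℕ → ℕ → ℝ≥0∞ := fun k c => if N ≤ k ∧ c < M then 0 else g c with ha
  set Z : ℝ≥0∞ := 1 + ∑' c, g c with hZ
  have hprod := prod_le_two_mul_pow_mul (a := fun k => ∑' c, a k c) (Z := Z) (N := N)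
    le_self_add (fun k => (ENNReal.tsum_le_tsum fun c => by
      simp only [ha]; split_ifs <;> simp).trans le_add_self)
    (fun k hk => by simpa [ha, hk] using hM)
  refine dimH_le_of_hausdorffMeasure_ne_top (ne_top_of_le_ne_top ?_
    (MeasureTheory.Measure.hausdorffMeasure_le_liminf_tsum (l := atTop)
      (ι := fun n : ℕ => Σ m : ℕ, (Fin (n + m) → ℕ)) (s : ℝ) _
      (fun n => ENNReal.ofReal ((1 / 2) ^ n)) ?_
      (fun n i => lurothPiece b N M (n + i.1) i.2) ?_ ?_))
  · have hbound : ∀ n : ℕ, ∑' i : Σ m : ℕ, (Fin (n + m) → ℕ),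
        Metric.ediam (lurothPiece b N M (n + i.1) i.2) ^ (s : ℝ) ≤ (2 * Z) ^ N * 2 := fun n => by
      calc _ ≤ ∑' i : Σ m : ℕ, (Fin (n + m) → ℕ), ∏ k : Fin (n + i.1), a k (i.2 k) :=
            ENNReal.tsum_le_tsum fun i => ediam_rpow_lurothPiece_le hs' N M _ _
        _ = ∑' m : ℕ, ∏ k ∈ Finset.range (n + m), ∑' c, a k c := by
            rw [ENNReal.tsum_sigma']
            exact tsum_congr fun m => tsum_prod_eq_prod_tsum a (n + m)
        _ ≤ ∑' m : ℕ, (2 * Z) ^ N * (1 / 2) ^ m := by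
            refine ENNReal.tsum_le_tsum fun m => (hprod _).trans (mul_le_mul' le_rfl ?_)
            exact pow_le_pow_right_of_le_one' (by simp) (by omega)
        _ = _ := by
            rw [ENNReal.tsum_mul_left, ENNReal.tsum_geometric, one_div, ENNReal.one_sub_inv_two,
              inv_inv]
    refine ne_top_of_le_ne_top ?_
      (liminf_le_of_frequently_le (Frequently.of_forall hbound))
    have : Z ≠ ∞ := by simp [hZ, hsum]
    finiteness
  · rw [← ENNReal.ofReal_zero]
    exact ENNReal.tendsto_ofReal
      (tendsto_pow_atTop_nhds_zero_of_lt_one (by norm_num) (by norm_num))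
  · refine Eventually.of_forall fun n i => Metric.ediam_le fun x hx y hy => ?_
    rw [edist_dist, Real.dist_eq]
    refine ENNReal.ofReal_le_ofReal ((abs_sub_le_of_mem_lurothPiece hx hy).2.trans ?_)
    exact pow_le_pow_of_le_one (by norm_num) (by norm_num) (by omega)
  · refine Eventually.of_forall fun n x hx => ?_
    obtain ⟨hx1, hx2, hx3⟩ := hx
    obtain ⟨j, hj, hnj⟩ := (hx3.and_eventually (eventually_ge_atTop n)).exists
    obtain ⟨m, rfl⟩ := Nat.exists_eq_add_of_le hnj
    exact mem_iUnion.2 ⟨⟨m, fun k => lurothPred k x⟩, hx1, fun k => rfl, hx2, hj⟩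

/-- Points whose Lüroth digits tend to infinity, and satisfy a doubly exponential lower bound
infinitely often. -/
lemma dimH_le_of_tendsto_of_frequently {E : Set ℝ} {b : ℝ} (hb : 1 ≤ b)
    (hE : ∀ x ∈ E, x ∈ Ioc (0 : ℝ) 1 ∧ Tendsto (fun k => lurothPred k x) atTop atTop ∧
      ∃ᶠ n in atTop, (∏ k ∈ Finset.range n, (lurothPred k x : ℝ)) ^ (b - 1) ≤ lurothPred n x) :
    dimH E ≤ ENNReal.ofReal (1 / (1 + b)) := by
  refine le_of_forall_gt_imp_ge_of_dense fun c hc => ?_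
  obtain ⟨s, hs1, hs2⟩ := ENNReal.lt_iff_exists_nnreal_btwn.1 hc
  refine le_trans ?_ hs2.le
  have hs3 : 1 / (1 + b) < s := by
    rwa [← ENNReal.ofReal_coe_nnreal, ENNReal.ofReal_lt_ofReal_iff_of_nonneg (by positivity)]
      at hs1
  have hs0 : (0 : ℝ) < s := lt_trans (by positivity) hs3
  obtain ⟨M, hM⟩ := exists_forall_dimH_le (s := s) (b := b) (by exact_mod_cast hs0)
    (by rwa [div_lt_iff₀ (by positivity)] at hs3)
  refine (dimH_mono fun x hx => ?_).trans
    ((dimH_iUnion _).trans_le (iSup_le hM))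
  obtain ⟨h1, h2, h3⟩ := hE x hx
  obtain ⟨N, hN⟩ := eventually_atTop.1 (h2.eventually_ge_atTop M)
  exact mem_iUnion.2 ⟨N, h1, fun k hk => hN k hk, h3⟩

lemma eventually_half_le_of_liminf_eq_one {u : ℕ → ℝ} (h : liminf u atTop = 1) :
    ∀ᶠ n in atTop, 1 / 2 ≤ u n := by
  rw [liminf_eq] at h
  have hne : {a | ∀ᶠ n in atTop, a ≤ u n}.Nonempty := by
    by_contra hcon
    rw [not_nonempty_iff_eq_empty] at hcon
    rw [hcon, Real.sSup_empty] at h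
    norm_num at h
  obtain ⟨a, ha, ha2⟩ := exists_lt_of_lt_csSup hne (show (1 / 2 : ℝ) < _ by rw [h]; norm_num)
  exact ha.mono fun n hn => ha2.le.trans hn

lemma dimH_le_of_frequently_pow_lt {ψ : ℕ → ℝ} (hpos : ∀ n : ℕ, 1 ≤ n → 0 < ψ n)
    (hψ : Tendsto ψ atTop atTop) {b : ℝ} (hb : 1 ≤ b)
    (h : b = 1 ∨ ∃ b', b < b' ∧ ∃ᶠ n in atTop, b' ^ n < ψ n) :
    dimH {x : ℝ | x ∈ Set.Ioc (0 : ℝ) 1 ∧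
        Filter.liminf (fun n : ℕ => Real.log (lurothDigit n x) / ψ n) atTop = 1} ≤
      ENNReal.ofReal (1 / (1 + b)) := by
  refine dimH_le_of_tendsto_of_frequently hb ?_
  rintro x ⟨hx, hlim⟩
  have hev : ∀ᶠ n in atTop, ψ (n + 1) / 2 ≤ Real.log ((lurothPred n x : ℝ) + 1) := by
    have h1 := (tendsto_add_atTop_nat 1).eventually (eventually_half_le_of_liminf_eq_one hlim)
    filter_upwards [h1] with n hn
    rw [le_div_iff₀ (hpos _ (by omega))] at hn
    have : (lurothDigit (n + 1) x : ℝ) = (lurothPred n x : ℝ) + 1 := by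
      unfold lurothDigit
      rw [Nat.add_sub_cancel, lurothD1_iterate]
      push_cast
      rfl
    rw [← this]
    linarith
  refine ⟨hx, ?_, ?_⟩
  · rw [← tendsto_natCast_atTop_iff (R := ℝ)]
    have h1 : Tendsto (fun n => ψ (n + 1) / 2) atTop atTop :=
      (hψ.comp (tendsto_add_atTop_nat 1)).atTop_div_const (by norm_num)
    have h2 := tendsto_atTop_mono' _ hev h1
    refine tendsto_atTop_mono (fun n => ?_) h2
    have := Real.log_le_sub_one_of_pos (x := (lurothPred n x : ℝ) + 1) (by positivity)
    linarith
  · rcases h with rfl | ⟨b', hbb', hfr⟩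
    · refine Frequently.of_forall fun n => ?_
      have : (1 : ℝ) ≤ lurothPred n x := by exact_mod_cast one_le_lurothPred hx n
      simpa using this
    · refine frequently_rpow_prod_le (one_le_lurothPred hx) hb hbb' ?_
      have h1 : ∃ᶠ n in atTop, b' ^ (n + 1) < ψ (n + 1) := by
        rw [frequently_atTop] at hfr ⊢
        intro a
        obtain ⟨m, hm, hm2⟩ := hfr (a + 1)
        exact ⟨m - 1, by omega, by rwa [Nat.sub_add_cancel (by omega)]⟩
      refine (h1.and_eventually hev).mono fun n hn => ?_
      have : b' ^ n ≤ b' ^ (n + 1) := pow_le_pow_right₀ (by linarith) (by omega)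
      linarith [hn.1, hn.2]

/-- The least majorant of `φ` growing at most by a factor of `W` at each step. -/
lemma exists_majorant {φ : ℕ → ℝ} (hφ : ∀ k, 0 < φ k) {A W₀ W : ℝ} (hW₀ : 0 < W₀)
    (hW : W₀ < W) (hA : ∀ k, φ k ≤ A * W₀ ^ k) :
    ∃ u : ℕ → ℝ, (∀ k, φ k ≤ u k) ∧ (∀ k, u (k + 1) ≤ W * u k) ∧
      ∃ᶠ k in atTop, u k = φ k := by
  have hW' : 0 < W := hW₀.trans hW
  have hex : ∀ k, ∃ j, ∀ i, φ (k + i) / W ^ i ≤ φ (k + j) / W ^ j := fun k => by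
    refine (continuous_of_discreteTopology (f := fun i => φ (k + i) / W ^ i)).exists_forall_ge'
      0 ?_
    rw [cocompact_eq_cofinite, Nat.cofinite_eq_atTop]
    have hlim : Tendsto (fun i : ℕ => A * W₀ ^ k * (W₀ / W) ^ i) atTop (𝓝 (A * W₀ ^ k * 0)) :=
      (_root_.tendsto_pow_atTop_nhds_zero_of_lt_one (by positivity)
        (by rwa [div_lt_one hW'])).const_mul _
    rw [mul_zero] at hlim
    filter_upwards [hlim.eventually_le_const (hφ k)] with i hi
    simp only [add_zero, pow_zero, div_one]
    refine le_trans ?_ hi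
    rw [div_pow, mul_div_assoc', mul_assoc, ← pow_add]
    exact div_le_div_of_nonneg_right (hA _) (by positivity)
  choose J hJ using hex
  refine ⟨fun k => φ (k + J k) / W ^ J k, fun k => by simpa using hJ k 0, fun k => ?_, ?_⟩
  · have h := hJ k (J (k + 1) + 1)
    rw [← add_assoc, add_right_comm, pow_succ, ← div_div, div_le_iff₀ hW'] at h
    linarith
  · rw [frequently_atTop]
    refine fun k => ⟨k + J k, by omega, le_antisymm ?_ (by simpa using hJ (k + J k) 0)⟩
    have h := hJ k (J k + J (k + J k))
    rw [← add_assoc, pow_add, ← div_div, div_right_comm,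
      div_le_div_iff_of_pos_right (by positivity)] at h
    exact h

/-- The orbit of `y` under the maps defining its Cantor series expansion in the bases `s`. -/
noncomputable def cantorOrbit (s : ℕ → ℕ) (y : ℝ) : ℕ → ℝ
  | 0 => y
  | n + 1 => Int.fract (s n * cantorOrbit s y n)

/-- The digits of the Cantor series expansion of `y` in the bases `s`. -/
noncomputable def cantorDigit (s : ℕ → ℕ) (y : ℝ) (n : ℕ) : ℕ := ⌊s n * cantorOrbit s y n⌋₊

lemma cantorOrbit_mem (s : ℕ → ℕ) {y : ℝ} (hy : y ∈ Ico (0 : ℝ) 1) (n : ℕ) :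
    cantorOrbit s y n ∈ Ico (0 : ℝ) 1 := by
  cases n with
  | zero => exact hy
  | succ n => exact ⟨Int.fract_nonneg _, Int.fract_lt_one _⟩

lemma cantorDigit_lt {s : ℕ → ℕ} (hs : ∀ k, 1 ≤ s k) {y : ℝ} (hy : y ∈ Ico (0 : ℝ) 1) (n : ℕ) :
    cantorDigit s y n < s n := by
  have h := cantorOrbit_mem s hy n
  have hsn : (1 : ℝ) ≤ s n := by exact_mod_cast hs n
  rw [cantorDigit, Nat.floor_lt (mul_nonneg (by linarith) h.1)]
  nlinarith [h.2]

lemma mul_cantorOrbit_eq (s : ℕ → ℕ) {y : ℝ} (hy : y ∈ Ico (0 : ℝ) 1) (n : ℕ) :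
    s n * cantorOrbit s y n = cantorDigit s y n + cantorOrbit s y (n + 1) := by
  have h := cantorOrbit_mem s hy n
  rw [cantorDigit, natCast_floor_eq_intCast_floor (mul_nonneg (by positivity) h.1)]
  exact (Int.floor_add_fract _).symm

lemma prod_mul_sub_eq_cantorOrbit_sub (s : ℕ → ℕ) {y z : ℝ} (hy : y ∈ Ico (0 : ℝ) 1)
    (hz : z ∈ Ico (0 : ℝ) 1) (n : ℕ) (h : ∀ k < n, cantorDigit s y k = cantorDigit s z k) :
    (∏ k ∈ Finset.range n, (s k : ℝ)) * (y - z) = cantorOrbit s y n - cantorOrbit s z n := by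
  induction n with
  | zero => simp [cantorOrbit]
  | succ n ih =>
    have h1 := ih fun k hk => h k (by omega)
    have h2 := mul_cantorOrbit_eq s hy n
    have h3 := mul_cantorOrbit_eq s hz n
    rw [h n (by omega)] at h2
    rw [Finset.prod_range_succ]
    linear_combination (s n : ℝ) * h1 + h2 - h3

lemma le_abs_sub_lurothSeries {s d d' : ℕ → ℕ} (hs : ∀ k, 3 ≤ s k)
    (hd : ∀ k, s k ≤ d k ∧ d k ≤ 2 * s k) (hd' : ∀ k, s k ≤ d' k ∧ d' k ≤ 2 * s k) {n : ℕ}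
    (heq : ∀ k < n, d k = d' k) (hlt : d n < d' n) :
    ((d' n : ℝ) - d n) / (8 * 4 ^ n * ((∏ k ∈ Finset.range n, (s k : ℝ)) * s n) ^ 2) ≤
      |lurothSeries d - lurothSeries d'| := by
  have h2 : ∀ k, 2 ≤ d k := fun k => by have := hs k; have := hd k; omega
  have h2' : ∀ k, 2 ≤ d' k := fun k => by have := hs k; have := hd' k; omega
  have e := sub_eq_prod_mul_sub (lurothSeries_mem h2) (lurothSeries_mem h2') n fun k hk => by
    rw [lurothD1_iterate_lurothSeries h2, lurothD1_iterate_lurothSeries h2', heq k hk]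
  simp only [lurothD1_iterate_lurothSeries h2] at e
  have hL : 1 / (4 ^ n * (∏ k ∈ Finset.range n, (s k : ℝ)) ^ 2) ≤
      ∏ k ∈ Finset.range n, (1 / ((d k : ℝ) * ((d k : ℝ) - 1))) := by
    have : 1 / (4 ^ n * (∏ k ∈ Finset.range n, (s k : ℝ)) ^ 2) =
        ∏ k ∈ Finset.range n, (1 / (4 * (s k : ℝ) ^ 2)) := by
      simp [Finset.prod_mul_distrib, Finset.prod_pow]
    rw [this]
    refine Finset.prod_le_prod (fun k _ => by positivity) fun k _ => ?_
    have h3 : (2 : ℝ) ≤ d k := by exact_mod_cast h2 k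
    have h4 : (d k : ℝ) ≤ 2 * s k := by exact_mod_cast (hd k).2
    exact one_div_le_one_div_of_le (by nlinarith) (by nlinarith)
  have hx := lurothT_iterate_mem (lurothSeries_mem h2) n
  have hx' := lurothT_iterate_mem (lurothSeries_mem h2') n
  have l1 := one_div_lurothD1_lt hx
  have l2 := eq_one_div_add_lurothT hx'
  have l3 := le_one_div_lurothD1_sub_one (lurothT_iterate_mem (lurothSeries_mem h2') (n + 1))
  rw [← Function.iterate_succ_apply' lurothT n] at l2
  rw [lurothD1_iterate_lurothSeries h2] at l1
  rw [lurothD1_iterate_lurothSeries h2'] at l2 l3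
  have hj : (3 : ℝ) ≤ d n := by exact_mod_cast (hs n).trans (hd n).1
  have hjj : (d n : ℝ) + 1 ≤ d' n := by exact_mod_cast hlt
  have hj2 : (d n : ℝ) ≤ 2 * s n := by exact_mod_cast (hd n).2
  have hj2' : (d' n : ℝ) ≤ 2 * s n := by exact_mod_cast (hd' n).2
  have hn1 : (3 : ℝ) ≤ d' (n + 1) := by exact_mod_cast (hs (n + 1)).trans (hd' (n + 1)).1
  have l4 : lurothT^[n + 1] (lurothSeries d') ≤ 1 / 2 :=
    l3.trans (one_div_le_one_div_of_le (by norm_num) (by linarith))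
  have hgap : ((d' n : ℝ) - d n) / (8 * (s n : ℝ) ^ 2) ≤
      lurothT^[n] (lurothSeries d) - lurothT^[n] (lurothSeries d') := by
    have a1 : lurothT^[n + 1] (lurothSeries d') / ((d' n : ℝ) * ((d' n : ℝ) - 1)) ≤
        (1 / 2) / ((d' n : ℝ) * d n) :=
      div_le_div₀ (by norm_num) l4 (by nlinarith) (by nlinarith)
    have a2 : (1 / 2) / ((d' n : ℝ) * d n) ≤ ((d' n : ℝ) - d n) / 2 / ((d' n : ℝ) * d n) :=
      div_le_div_of_nonneg_right (by linarith) (by nlinarith)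
    have a3 : 1 / (d n : ℝ) - 1 / (d' n : ℝ) - ((d' n : ℝ) - d n) / 2 / ((d' n : ℝ) * d n) =
        ((d' n : ℝ) - d n) / (2 * ((d' n : ℝ) * d n)) := by
      have b1 : (d n : ℝ) ≠ 0 := by linarith
      have b2 : (d' n : ℝ) ≠ 0 := by linarith
      field_simp
      ring
    have a4 : ((d' n : ℝ) - d n) / (8 * (s n : ℝ) ^ 2) ≤
        ((d' n : ℝ) - d n) / (2 * ((d' n : ℝ) * d n)) :=
      div_le_div_of_nonneg_left (by linarith) (by nlinarith) (by nlinarith)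
    linarith
  have hpos : 0 ≤ ((d' n : ℝ) - d n) / (8 * (s n : ℝ) ^ 2) :=
    div_nonneg (by linarith) (by positivity)
  rw [e]
  refine le_trans ?_ (le_abs_self _)
  calc _ = 1 / (4 ^ n * (∏ k ∈ Finset.range n, (s k : ℝ)) ^ 2) *
        (((d' n : ℝ) - d n) / (8 * (s n : ℝ) ^ 2)) := by
        rw [div_mul_div_comm, one_mul]; congr 1; ring
    _ ≤ _ := mul_le_mul hL hgap hpos ((by positivity : (0 : ℝ) ≤ _).trans hL)

/-- The point whose Lüroth digits are the Cantor digits of `y` shifted by the bases. -/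
noncomputable def cantorToLuroth (s : ℕ → ℕ) (y : ℝ) : ℝ :=
  lurothSeries fun k => s k + cantorDigit s y k

lemma exists_cantorDigit_ne {s : ℕ → ℕ} (hs : ∀ k, 3 ≤ s k) {y z : ℝ} (hy : y ∈ Ico (0 : ℝ) 1)
    (hz : z ∈ Ico (0 : ℝ) 1) (hyz : y ≠ z) : ∃ n, cantorDigit s y n ≠ cantorDigit s z n := by
  by_contra! hcon
  have hlim : Tendsto (fun n : ℕ => (3 : ℝ) ^ n * |y - z|) atTop atTop :=
    (tendsto_pow_atTop_atTop_of_one_lt (by norm_num)).atTop_mul_const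
      (abs_pos.2 (sub_ne_zero.2 hyz))
  obtain ⟨n, hn⟩ := (hlim.eventually_gt_atTop 1).exists
  have h := prod_mul_sub_eq_cantorOrbit_sub s hy hz n fun k _ => hcon k
  have h3 : (3 : ℝ) ^ n ≤ ∏ k ∈ Finset.range n, (s k : ℝ) := by
    calc (3 : ℝ) ^ n = ∏ k ∈ Finset.range n, (3 : ℝ) := by simp
      _ ≤ _ := Finset.prod_le_prod (fun _ _ => by norm_num) fun k _ => by exact_mod_cast hs k
  have h4 : |cantorOrbit s y n - cantorOrbit s z n| ≤ 1 := by
    have h5 := cantorOrbit_mem s hy n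
    have h6 := cantorOrbit_mem s hz n
    rw [abs_le]; constructor <;> linarith [h5.1, h5.2, h6.1, h6.2]
  rw [← h, abs_mul, abs_of_nonneg ((by positivity : (0 : ℝ) ≤ 3 ^ n).trans h3)] at h4
  linarith [mul_le_mul_of_nonneg_right h3 (abs_nonneg (y - z))]

lemma abs_sub_le_mul_abs_cantorToLuroth_sub_rpow {s : ℕ → ℕ} (hs : ∀ k, 3 ≤ s k) {σ C : ℝ}
    (hσ : 0 < σ) (hσ1 : σ ≤ 1)
    (hC : ∀ n, σ * (Real.log (s n) + n * Real.log 4 + Real.log 16) ≤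
      (1 - 2 * σ) * ∑ k ∈ Finset.range n, Real.log (s k) + C)
    {y z : ℝ} (hy : y ∈ Ico (0 : ℝ) 1) (hz : z ∈ Ico (0 : ℝ) 1) :
    |y - z| ≤ Real.exp C * |cantorToLuroth s y - cantorToLuroth s z| ^ σ := by
  rcases eq_or_ne y z with rfl | hyz
  · simp [Real.zero_rpow hσ.ne']
  classical
  obtain ⟨n, hn, hmin⟩ : ∃ n, cantorDigit s y n ≠ cantorDigit s z n ∧
      ∀ k < n, cantorDigit s y k = cantorDigit s z k :=
    have hex := exists_cantorDigit_ne hs hy hz hyz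
    ⟨Nat.find hex, Nat.find_spec hex, fun k hk => not_not.1 (Nat.find_min hex hk)⟩
  wlog hlt : cantorDigit s y n < cantorDigit s z n generalizing y z
  · rw [abs_sub_comm, abs_sub_comm (cantorToLuroth s y)]
    exact this hz hy hyz.symm hn.symm (fun k hk => (hmin k hk).symm) (by omega)
  have hs0 : ∀ k, (0 : ℝ) < s k := fun k => by
    have := hs k; exact_mod_cast (by omega : 0 < s k)
  have hP0 : 0 < ∏ k ∈ Finset.range n, (s k : ℝ) := Finset.prod_pos fun k _ => hs0 k
  have hsep := le_abs_sub_lurothSeries (d := fun k => s k + cantorDigit s y k)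
    (d' := fun k => s k + cantorDigit s z k) hs
    (fun k => by
      have := cantorDigit_lt (s := s) (fun k => by have := hs k; omega) hy k
      constructor <;> omega)
    (fun k => by
      have := cantorDigit_lt (s := s) (fun k => by have := hs k; omega) hz k
      constructor <;> omega)
    (n := n) (fun k hk => by simp [hmin k hk]) (by simpa using hlt)
  change _ ≤ |cantorToLuroth s y - cantorToLuroth s z| at hsep
  set D := |cantorToLuroth s y - cantorToLuroth s z|
  have horb := prod_mul_sub_eq_cantorOrbit_sub s hy hz n hmin
  have hy1 := cantorOrbit_mem s hy n
  have hz1 := cantorOrbit_mem s hz n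
  have hy2 := cantorOrbit_mem s hy (n + 1)
  have hz2 := cantorOrbit_mem s hz (n + 1)
  have hy3 := mul_cantorOrbit_eq s hy n
  have hz3 := mul_cantorOrbit_eq s hz n
  have hlog : ∑ k ∈ Finset.range n, Real.log (s k) =
      Real.log (∏ k ∈ Finset.range n, (s k : ℝ)) :=
    (Real.log_prod fun k _ => (hs0 k).ne').symm
  have hCn := hC n
  rw [hlog] at hCn
  have hlt' : (cantorDigit s y n : ℝ) + 1 ≤ cantorDigit s z n := by exact_mod_cast hlt
  push_cast at hsep
  rw [add_sub_add_left_eq_sub] at hsep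
  set P := ∏ k ∈ Finset.range n, (s k : ℝ)
  have ht0 : 0 < |y - z| := abs_pos.2 (sub_ne_zero.2 hyz)
  have ht1 : P * |y - z| ≤ 1 := by
    rw [← abs_of_pos hP0, ← abs_mul, horb, abs_le]
    constructor <;> linarith [hy1.1, hy1.2, hz1.1, hz1.2]
  have ht2 : s n * (P * |y - z|) ≤ 2 * ((cantorDigit s z n : ℝ) - cantorDigit s y n) := by
    rw [← abs_of_pos hP0, ← abs_mul, horb, ← abs_of_pos (hs0 n), ← abs_mul,
      mul_sub, hy3, hz3, abs_le]
    constructor <;> linarith [hy2.1, hy2.2, hz2.1, hz2.2]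
  have hD : |y - z| / (16 * 4 ^ n * (P * s n)) ≤ D := by
    refine le_trans ?_ hsep
    rw [div_le_div_iff₀ (by have := hs0 n; positivity) (by have := hs0 n; positivity)]
    have h16 : 0 ≤ 8 * 4 ^ n * (P * s n) := by have := hs0 n; positivity
    nlinarith [mul_le_mul_of_nonneg_right ht2 h16]
  have hD0 : 0 < D := lt_of_lt_of_le (by have := hs0 n; positivity) hD
  have hlogD := Real.log_le_log (by have := hs0 n; positivity) hD
  rw [Real.log_div ht0.ne' (by have := hs0 n; positivity),
    Real.log_mul (by positivity) (by have := hs0 n; positivity),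
    Real.log_mul (by norm_num) (by positivity), Real.log_pow,
    Real.log_mul hP0.ne' (hs0 n).ne'] at hlogD
  have hlogt := Real.log_le_log (by positivity) ht1
  rw [Real.log_one, Real.log_mul hP0.ne' ht0.ne'] at hlogt
  rw [← Real.log_le_log_iff ht0 (by positivity), Real.log_mul (by positivity) (by positivity),
    Real.log_exp, Real.log_rpow hD0]
  have k1 := mul_le_mul_of_nonneg_left hlogD hσ.le
  have k2 := mul_le_mul_of_nonneg_left hlogt (sub_nonneg.2 hσ1)
  nlinarith

lemma le_dimH_cantorToLuroth_image {s : ℕ → ℕ} (hs : ∀ k, 3 ≤ s k) {σ : NNReal} {C : ℝ}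
    (hσ : 0 < σ) (hσ1 : (σ : ℝ) ≤ 1)
    (hC : ∀ n, (σ : ℝ) * (Real.log (s n) + n * Real.log 4 + Real.log 16) ≤
      (1 - 2 * (σ : ℝ)) * ∑ k ∈ Finset.range n, Real.log (s k) + C) :
    (σ : ℝ≥0∞) ≤ dimH (cantorToLuroth s '' Ico (0 : ℝ) 1) := by
  have hσ' : (0 : ℝ) < σ := hσ
  have hH : ∀ y ∈ Ico (0 : ℝ) 1, ∀ z ∈ Ico (0 : ℝ) 1, |y - z| ≤
      Real.exp C * |cantorToLuroth s y - cantorToLuroth s z| ^ (σ : ℝ) := fun y hy z hz =>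
    abs_sub_le_mul_abs_cantorToLuroth_sub_rpow hs hσ' hσ1 hC hy hz
  have hinj : InjOn (cantorToLuroth s) (Ico 0 1) := fun y hy z hz hyz => by
    have := hH y hy z hz
    rw [hyz, sub_self, abs_zero, Real.zero_rpow hσ'.ne', mul_zero] at this
    exact sub_eq_zero.1 (abs_nonpos_iff.1 this)
  have hleft := hinj.leftInvOn_invFunOn
  set f := Function.invFunOn (cantorToLuroth s) (Ico 0 1)
  have hol : HolderOnWith (Real.exp C).toNNReal σ f (cantorToLuroth s '' Ico (0 : ℝ) 1) := by
    rintro _ ⟨y, hy, rfl⟩ _ ⟨z, hz, rfl⟩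
    rw [hleft hy, hleft hz, edist_dist, edist_dist, Real.dist_eq, Real.dist_eq,
      ENNReal.ofReal_rpow_of_nonneg (abs_nonneg _) hσ'.le]
    change _ ≤ ENNReal.ofReal _ * _
    rw [← ENNReal.ofReal_mul (Real.exp_pos _).le]
    exact ENNReal.ofReal_le_ofReal (hH y hy z hz)
  have h := hol.dimH_image_le hσ
  rw [hleft.image_image, Real.dimH_of_nonempty_interior (by simp), Module.finrank_self,
    Nat.cast_one, ENNReal.le_div_iff_mul_le (by simp [hσ.ne']) (by simp), one_mul] at h
  exact h

lemma exists_nat_mul_le_sum_add {v : ℕ → ℝ} (hv0 : ∀ k, 0 ≤ v k) (hv : Tendsto v atTop atTop)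
    {K : ℝ} (hK : 0 ≤ K) : ∃ B, ∀ n : ℕ, n * K ≤ ∑ k ∈ Finset.range n, v k + B := by
  obtain ⟨m, hm⟩ := eventually_atTop.1 (hv.eventually_ge_atTop K)
  refine ⟨m * K, fun n => ?_⟩
  induction n with
  | zero => simp; positivity
  | succ n ih =>
    rcases le_or_gt m n with h | h
    · rw [Finset.sum_range_succ]
      push_cast
      linarith [hm n h]
    · have h1 : ((n + 1 : ℕ) : ℝ) ≤ m := by exact_mod_cast h
      have h2 := Finset.sum_nonneg fun k (_ : k ∈ Finset.range (n + 1)) => hv0 k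
      nlinarith

lemma le_add_mul_sum_of_le_mul {u : ℕ → ℝ} {W : ℝ} (hu : ∀ k, u (k + 1) ≤ W * u k) (n : ℕ) :
    u n ≤ u 0 + (W - 1) * ∑ k ∈ Finset.range n, u k := by
  induction n with
  | zero => simp
  | succ n ih =>
    rw [Finset.sum_range_succ]
    linarith [hu n]

lemma liminf_eq_one_of_frequently_le {u φ : ℕ → ℝ} {B : ℝ} (hφ : ∀ k, 0 < φ k)
    (hφt : Tendsto φ atTop atTop) (h1 : ∀ k, φ k ≤ u k) (h2 : ∃ᶠ k in atTop, u k ≤ φ k + B) :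
    liminf (fun k => u k / φ k) atTop = 1 := by
  have hge : ∀ k, 1 ≤ u k / φ k := fun k => by rw [one_le_div (hφ k)]; exact h1 k
  have hbdd : IsBoundedUnder (· ≥ ·) atTop fun k => u k / φ k :=
    isBoundedUnder_of ⟨1, hge⟩
  have hle : ∀ ε : ℝ, 0 < ε → ∃ᶠ k in atTop, u k / φ k ≤ 1 + ε := fun ε hε => by
    refine (h2.and_eventually (hφt.eventually_ge_atTop (B / ε))).mono fun k hk => ?_
    rw [div_le_iff₀ (hφ k)]
    have := (div_le_iff₀ hε).1 hk.2
    linarith [hk.1]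
  refine le_antisymm (le_of_forall_pos_le_add fun ε hε =>
    liminf_le_of_frequently_le (hle ε hε) hbdd) ?_
  exact le_liminf_of_le (IsCoboundedUnder.of_frequently_le (hle 1 one_pos))
    (Eventually.of_forall hge)

lemma le_dimH_of_eventually_le_pow {ψ : ℕ → ℝ} (hpos : ∀ n : ℕ, 1 ≤ n → 0 < ψ n)
    (hψ : Tendsto ψ atTop atTop) {W₀ W : ℝ} (hW₀ : 1 ≤ W₀) (hW : W₀ < W)
    (h : ∀ᶠ n in atTop, ψ n ≤ W₀ ^ n) {σ : NNReal} (hσ : 0 < σ) (hσW : (σ : ℝ) * (1 + W) < 1) :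
    (σ : ℝ≥0∞) ≤ dimH {x : ℝ | x ∈ Set.Ioc (0 : ℝ) 1 ∧
        Filter.liminf (fun n : ℕ => Real.log (lurothDigit n x) / ψ n) atTop = 1} := by
  have hσ' : (0 : ℝ) < σ := hσ
  have hφ : ∀ k, 0 < ψ (k + 1) := fun k => hpos _ (by omega)
  have hφt : Tendsto (fun k => ψ (k + 1)) atTop atTop := hψ.comp (tendsto_add_atTop_nat 1)
  obtain ⟨A, hA⟩ : ∃ A, ∀ k, ψ (k + 1) ≤ A * W₀ ^ k := by
    have hb : IsBoundedUnder (· ≤ ·) atTop fun k => ψ (k + 1) / W₀ ^ k := by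
      refine isBoundedUnder_of_eventually_le (a := W₀) ?_
      filter_upwards [(tendsto_add_atTop_nat 1).eventually h] with k hk
      rw [div_le_iff₀ (by positivity), ← pow_succ']
      exact hk
    obtain ⟨A, hA⟩ := hb.bddAbove_range
    exact ⟨A, fun k => (div_le_iff₀ (by positivity)).1 (hA (mem_range_self k))⟩
  obtain ⟨u, hu1, hu2, hu3⟩ := exists_majorant hφ (by linarith) hW hA
  have hu0 : ∀ k, 0 < u k := fun k => (hφ k).trans_le (hu1 k)
  set s : ℕ → ℕ := fun k => ⌈Real.exp (u k)⌉₊ + 3 with hs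
  have hs3 : ∀ k, 3 ≤ s k := fun k => by simp [hs]
  have hs0 : ∀ k, (0 : ℝ) < s k := fun k => by
    have := hs3 k; exact_mod_cast (by omega : 0 < s k)
  have hexp : ∀ k, Real.exp (u k) ≤ s k := fun k => by
    simp only [hs]; push_cast; linarith [Nat.le_ceil (Real.exp (u k))]
  have hsexp : ∀ k, (s k : ℝ) ≤ 5 * Real.exp (u k) := fun k => by
    simp only [hs]; push_cast
    linarith [Nat.ceil_lt_add_one (Real.exp_pos (u k)).le, Real.one_le_exp (hu0 k).le]
  have hus : ∀ k, u k ≤ Real.log (s k) := fun k => (Real.le_log_iff_exp_le (hs0 k)).2 (hexp k)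
  have hsu : ∀ k, Real.log (s k) ≤ Real.log 5 + u k := fun k => by
    have := Real.log_le_log (hs0 k) (hsexp k)
    rwa [Real.log_mul (by norm_num) (Real.exp_pos _).ne', Real.log_exp] at this
  have hκ : 0 < 1 - (σ : ℝ) * (1 + W) := by linarith
  have hlog4 : 0 < Real.log 4 := Real.log_pos (by norm_num)
  obtain ⟨B, hB⟩ := exists_nat_mul_le_sum_add (v := fun k => Real.log (s k))
    (fun k => (hu0 k).le.trans (hus k))
    (tendsto_atTop_mono (fun k => (hu1 k).trans (hus k)) hφt)
    (K := (σ : ℝ) * Real.log 4 / (1 - (σ : ℝ) * (1 + W))) (by positivity)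
  refine (le_dimH_cantorToLuroth_image hs3 (σ := σ)
    (C := (σ : ℝ) * (u 0 + Real.log 5 + Real.log 16) + (1 - (σ : ℝ) * (1 + W)) * B) hσ
    (by nlinarith) fun n => ?_).trans (dimH_mono ?_)
  · have h1 := mul_le_mul_of_nonneg_left (hB n) hκ.le
    have h2 : (1 - (σ : ℝ) * (1 + W)) *
        (n * ((σ : ℝ) * Real.log 4 / (1 - (σ : ℝ) * (1 + W)))) = σ * (n * Real.log 4) := by
      field_simp
    have h3 := le_add_mul_sum_of_le_mul hu2 n
    have h4 : (W - 1) * ∑ k ∈ Finset.range n, u k ≤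
        (W - 1) * ∑ k ∈ Finset.range n, Real.log (s k) :=
      mul_le_mul_of_nonneg_left (Finset.sum_le_sum fun k _ => hus k) (by linarith)
    have h5 := mul_le_mul_of_nonneg_left ((hsu n).trans (add_le_add_right (h3.trans
      (add_le_add_right h4 _)) _)) hσ'.le
    rw [h2] at h1
    linarith
  · rintro _ ⟨y, hy, rfl⟩
    have he := cantorDigit_lt (s := s) (fun k => by have := hs3 k; omega) hy
    have hd2 : ∀ k, 2 ≤ s k + cantorDigit s y k := fun k => by have := hs3 k; omega
    refine ⟨lurothSeries_mem hd2, ?_⟩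
    rw [← liminf_nat_add _ 1]
    have hdig : ∀ k, lurothDigit (k + 1) (cantorToLuroth s y) = s k + cantorDigit s y k :=
      fun k => lurothD1_iterate_lurothSeries hd2 k
    simp only [hdig]
    refine liminf_eq_one_of_frequently_le (B := Real.log 2 + Real.log 5) hφ hφt (fun k => ?_)
      (hu3.mono fun k hk => ?_)
    · refine ((hu1 k).trans (hus k)).trans (Real.log_le_log (hs0 k) ?_)
      push_cast
      linarith [(Nat.cast_nonneg (cantorDigit s y k) : (0 : ℝ) ≤ _)]
    · have h1 : ((s k + cantorDigit s y k : ℕ) : ℝ) ≤ 2 * s k := by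
        have := he k
        exact_mod_cast (by omega : s k + cantorDigit s y k ≤ 2 * s k)
      have h2 := Real.log_le_log (by have := hd2 k; exact_mod_cast (by omega)) h1
      rw [Real.log_mul (by norm_num) (hs0 k).ne'] at h2
      linarith [hsu k]

theorem dimH_luroth_Einf_psi (ψ : ℕ → ℝ) (hpos : ∀ n : ℕ, 1 ≤ n → 0 < ψ n)
    (hψ : Tendsto ψ atTop atTop) (V : ℝ≥0∞)
    (hV : ENNReal.log V =
      Filter.limsup (fun n : ℕ => ((Real.log (ψ n) / n : ℝ) : EReal)) atTop) :
    dimH {x : ℝ | x ∈ Set.Ioc (0 : ℝ) 1 ∧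
        Filter.liminf (fun n : ℕ => Real.log (lurothDigit n x) / ψ n) atTop = 1}
      = 1 / (1 + V) := by
  have hVfr : ∀ b : ℝ, 0 < b → ENNReal.ofReal b < V → ∃ᶠ n in atTop, b ^ n < ψ n := by
    intro b hb hbV
    rw [← ENNReal.log_lt_log_iff, hV, ENNReal.log_ofReal, if_neg (not_le.2 hb)] at hbV
    refine ((frequently_lt_of_lt_limsup (by isBoundedDefault) hbV).and_eventually
      (eventually_ge_atTop 1)).mono fun n hn => ?_
    have hn1 : (0 : ℝ) < n := by exact_mod_cast hn.2
    have h1 := EReal.coe_lt_coe_iff.1 hn.1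
    rw [lt_div_iff₀ hn1, mul_comm, ← Real.log_pow] at h1
    exact (Real.log_lt_log_iff (by positivity) (hpos n hn.2)).1 h1
  have hVev : ∀ b : ℝ, 0 < b → V < ENNReal.ofReal b → ∀ᶠ n in atTop, ψ n ≤ b ^ n := by
    intro b hb hbV
    rw [← ENNReal.log_lt_log_iff, hV, ENNReal.log_ofReal, if_neg (not_le.2 hb)] at hbV
    filter_upwards [eventually_lt_of_limsup_lt hbV (by isBoundedDefault),
      eventually_ge_atTop 1] with n hn hn2
    have hn1 : (0 : ℝ) < n := by exact_mod_cast hn2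
    have h1 := EReal.coe_lt_coe_iff.1 hn
    rw [div_lt_iff₀ hn1, mul_comm, ← Real.log_pow] at h1
    exact ((Real.log_lt_log_iff (hpos n hn2) (by positivity)).1 h1).le
  have hV1 : 1 ≤ V := by
    rw [← ENNReal.log_le_log_iff, hV, ENNReal.log_one]
    refine le_limsup_of_frequently_le (Eventually.frequently ?_) (by isBoundedDefault)
    filter_upwards [hψ.eventually_ge_atTop 1] with n hn
    exact EReal.coe_nonneg.2 (div_nonneg (Real.log_nonneg hn) (by positivity))
  rw [one_div]
  refine le_antisymm ?_ (ENNReal.le_of_forall_nnreal_lt fun σ hσ => ?_)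
  · have hinv : ∀ b : ℝ, 1 ≤ b → (b = 1 ∨ ENNReal.ofReal b < V) →
        ENNReal.ofReal (1 + b) ≤ (dimH {x : ℝ | x ∈ Set.Ioc (0 : ℝ) 1 ∧
          Filter.liminf (fun n : ℕ => Real.log (lurothDigit n x) / ψ n) atTop = 1})⁻¹ := by
      intro b hb hbV
      rw [ENNReal.le_inv_iff_le_inv, ← ENNReal.ofReal_inv_of_pos (by linarith), ← one_div]
      refine dimH_le_of_frequently_pow_lt hpos hψ hb (hbV.imp_right fun hlt => ?_)
      obtain ⟨b', hb1, hb2⟩ := ENNReal.lt_iff_exists_nnreal_btwn.1 hlt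
      have hbb : b < b' := by
        rwa [← ENNReal.ofReal_coe_nnreal, ENNReal.ofReal_lt_ofReal_iff_of_nonneg (by linarith)]
          at hb1
      exact ⟨b', hbb, hVfr b' (by linarith) (by simpa using hb2)⟩
    rw [ENNReal.le_inv_iff_le_inv]
    refine ENNReal.le_of_forall_nnreal_lt fun r hr => ?_
    rcases le_or_gt (r : ℝ) 2 with h | h
    · refine le_trans ?_ (hinv 1 le_rfl (Or.inl rfl))
      rw [← ENNReal.ofReal_coe_nnreal]
      exact ENNReal.ofReal_le_ofReal (by linarith)
    · have := hinv ((r : ℝ) - 1) (by linarith) (Or.inr ?_)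
      · simpa using this
      · rw [ENNReal.ofReal_sub _ zero_le_one, ENNReal.ofReal_coe_nnreal, ENNReal.ofReal_one]
        exact ENNReal.sub_lt_of_lt_add (by exact_mod_cast (by linarith : (1 : ℝ) ≤ r))
          (by rwa [add_comm])
  · rcases eq_or_ne σ 0 with rfl | hσ0
    · simp
    have hσpos : 0 < σ := pos_iff_ne_zero.2 hσ0
    have hσ' : (0 : ℝ) < σ := hσpos
    have hVtop : V ≠ ∞ := by rintro rfl; simp at hσ
    lift V to NNReal using hVtop
    have hv1 : (1 : ℝ) ≤ V := by exact_mod_cast hV1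
    have hσV : (V : ℝ) < 1 / σ - 1 := by
      rw [ENNReal.lt_inv_iff_lt_inv, ← ENNReal.coe_inv hσ0] at hσ
      have : (1 : ℝ) + V < (σ : ℝ)⁻¹ := by exact_mod_cast hσ
      rw [one_div]; linarith
    obtain ⟨W, hW1, hW2⟩ := exists_between hσV
    obtain ⟨W₀, hW3, hW4⟩ := exists_between hW1
    refine le_dimH_of_eventually_le_pow hpos hψ (by linarith) hW4
      (hVev W₀ (by linarith) ?_) hσpos ?_
    · rw [← ENNReal.ofReal_coe_nnreal, ENNReal.ofReal_lt_ofReal_iff (by linarith)]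
      exact hW3
    · rw [lt_sub_iff_add_lt, lt_div_iff₀ hσ'] at hW2
      linarith
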